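/- arXiv:1006.5198 — 4 statements merged into one kernel-verified Lean document; each statement's English description precedes it below -/
import Mathlib

section
/- Let φ be a faithful state on M_n(ℂ). Suppose τ ∈ CP_φ satisfies τ = λτ₁ + (1−λ)τ₀ with τ₀, τ₁ ∈ CP_φ and 0 < λ < 1, and suppose E ∈ M_n(ℂ) is an orthogonal projection with τ(E) = E. Then τ₀(E) = E and τ₁(E) = E. Consequently, the set of non-ergodic elements of CP_φ is a face of CP_φ: if a proper convex combination of elements of CP_φ is non-ergodic, then both constituents are non-ergodic. -/
/-!
Let `F = 1 - E` and let `w` be in the range of `F`. Since `E w = 0`, the quadratic form of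
`τ E = E` vanishes at `w`; it is a combination with positive coefficients of the quadratic forms
of the positive semidefinite matrices `τ₁ E` and `τ₀ E`, so both of these kill `w`
(`mul_compl_eq_zero`). Hence `τᵢ E * F = 0`. The map `τ` is unital, so it also fixes `F`, and the
same argument gives `τᵢ F * E = 0`. Multiplying `τᵢ E + τᵢ F = 1` on the right by `E` yields
`τᵢ E = E` (`fixes_of_mul_eq_zero`). The face property follows, because the same projection
witnesses that both constituents are non-ergodic.
-/

open Matrix ComplexOrder

/-- The algebra of `n × n` complex matrices. -/
abbrev Mat (n : ℕ) := Matrix (Fin n) (Fin n) ℂ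

/-- A linear map between matrix algebras is completely positive if, for every `k`,
applying it blockwise to a positive semidefinite `k × k` block matrix yields a
positive semidefinite block matrix (i.e. `τ ⊗ id_k` is positive for all `k`). -/
def IsCPmap {m n : ℕ} (T : Mat m →ₗ[ℂ] Mat n) : Prop :=
  ∀ k : ℕ, ∀ A : Matrix (Fin k × Fin m) (Fin k × Fin m) ℂ, A.PosSemidef →
    (Matrix.of fun p q : Fin k × Fin n =>
      T (Matrix.of fun a b => A (p.1, a) (q.1, b)) p.2 q.2).PosSemidef

/-- A state on a (finite-dimensional) matrix algebra: a positive unital linear functional. -/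
def IsStateOn {I : Type} [Fintype I] [DecidableEq I]
    (φ : Matrix I I ℂ →ₗ[ℂ] ℂ) : Prop :=
  φ 1 = 1 ∧ ∀ x : Matrix I I ℂ, x.PosSemidef → 0 ≤ (φ x).re ∧ (φ x).im = 0

/-- A faithful functional: `φ(x* x) = 0` implies `x = 0`. -/
def IsFaithful {n : ℕ} (φ : Mat n →ₗ[ℂ] ℂ) : Prop :=
  ∀ x : Mat n, φ (xᴴ * x) = 0 → x = 0

/-- Membership in `CP_φ`: unital completely positive `φ`-preserving maps. -/
def MemCPphi {n : ℕ} (φ : Mat n →ₗ[ℂ] ℂ) (τ : Mat n →ₗ[ℂ] Mat n) : Prop :=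
  IsCPmap τ ∧ τ 1 = 1 ∧ ∀ x : Mat n, φ (τ x) = φ x

/-- Membership in the convex set of unital completely positive maps. -/
def MemUCP {n : ℕ} (τ : Mat n →ₗ[ℂ] Mat n) : Prop :=
  IsCPmap τ ∧ τ 1 = 1

/-- An orthogonal projection in `M_n(ℂ)`. -/
def IsProjn {n : ℕ} (E : Mat n) : Prop := E.IsHermitian ∧ E * E = E

/-- Ergodicity: the only invariant orthogonal projections are `0` and `1`. -/
def IsErgodic {n : ℕ} (τ : Mat n →ₗ[ℂ] Mat n) : Prop :=
  ∀ E : Mat n, IsProjn E → τ E = E → E = 0 ∨ E = 1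

/-- The normalized trace `x ↦ tr(x)/n`, as a linear functional on `M_n(ℂ)`. -/
noncomputable def trφ (n : ℕ) : Mat n →ₗ[ℂ] ℂ :=
  ((n : ℂ)⁻¹) • Matrix.traceLinearMap (Fin n) ℂ ℂ

/-- The completely positive map `x ↦ ∑ k, v k * x * (v k)ᴴ` given by a Kraus family. -/
noncomputable def krausMap {n d : ℕ} (v : Fin d → Mat n) : Mat n →ₗ[ℂ] Mat n where
  toFun x := ∑ k, v k * x * (v k)ᴴ
  map_add' x y := by simp [Matrix.mul_add, Matrix.add_mul, Finset.sum_add_distrib]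
  map_smul' c x := by simp [Matrix.mul_smul, Matrix.smul_mul, Finset.smul_sum]

/-- Entrywise complex conjugation of a matrix. -/
def mconj {n : ℕ} (x : Mat n) : Mat n := x.map (starRingEnd ℂ)

/-- `τ` is an extreme point of the convex set `{σ | P σ}` of maps on `M_n(ℂ)`. -/
def IsExtremeIn {n : ℕ} (P : (Mat n →ₗ[ℂ] Mat n) → Prop)
    (τ : Mat n →ₗ[ℂ] Mat n) : Prop :=
  P τ ∧ ∀ τ₀ τ₁ : Mat n →ₗ[ℂ] Mat n, P τ₀ → P τ₁ →
    ∀ l : ℝ, 0 < l → l < 1 → τ = (l : ℂ) • τ₁ + ((1 - l : ℝ) : ℂ) • τ₀ →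
      τ₀ = τ ∧ τ₁ = τ

/-- Complete positivity of a map defined on an operator system `S ⊆ M_m(ℂ)`:
every positive semidefinite block matrix with entries in `S` is mapped blockwise to a
positive semidefinite block matrix. -/
def IsCPon {m n : ℕ} (S : Submodule ℂ (Mat m)) (τ : S →ₗ[ℂ] Mat n) : Prop :=
  ∀ k : ℕ, ∀ B : Matrix (Fin k) (Fin k) S,
    (Matrix.of fun p q : Fin k × Fin m => ((B p.1 q.1 : Mat m)) p.2 q.2).PosSemidef →
    (Matrix.of fun p q : Fin k × Fin n => (τ (B p.1 q.1)) p.2 q.2).PosSemidef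

/-- Complete positivity with one block is positivity. -/
lemma IsCPmap.posSemidef {m n : ℕ} {T : Mat m →ₗ[ℂ] Mat n} (hT : IsCPmap T) {A : Mat m}
    (hA : A.PosSemidef) : (T A).PosSemidef := by
  have h := hT 1 (A.submatrix Prod.snd Prod.snd) (hA.submatrix _)
  exact h.submatrix (fun i : Fin n => ((0 : Fin 1), i))

lemma IsProjn.posSemidef {n : ℕ} {E : Mat n} (hE : IsProjn E) : E.PosSemidef := by
  have h := Matrix.posSemidef_conjTranspose_mul_self E
  rwa [hE.1.eq, hE.2] at h

lemma IsProjn.compl {n : ℕ} {E : Mat n} (hE : IsProjn E) : IsProjn (1 - E) := by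
  refine ⟨Matrix.isHermitian_one.sub hE.1, ?_⟩
  simp [sub_mul, mul_sub, hE.2]

/-- If a projection `E` is a combination of positive semidefinite matrices, then each one that
enters with a positive coefficient vanishes on the kernel of `E`. -/
lemma mul_compl_eq_zero {n : ℕ} {E P Q : Mat n} (hE : IsProjn E) (hP : P.PosSemidef)
    (hQ : Q.PosSemidef) {a b : ℝ} (ha : 0 < a) (hb : 0 ≤ b)
    (h : E = (a : ℂ) • P + (b : ℂ) • Q) : P * (1 - E) = 0 := by
  refine Matrix.ext_iff_mulVec.mpr fun v => ?_
  rw [← Matrix.mulVec_mulVec, Matrix.zero_mulVec, ← hP.dotProduct_mulVec_zero_iff]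
  set w := (1 - E) *ᵥ v with hw
  have hEw : E *ᵥ w = 0 := by
    rw [hw, Matrix.mulVec_mulVec, mul_sub, hE.2, mul_one, sub_self, Matrix.zero_mulVec]
  have hsum : (a : ℂ) * (star w ⬝ᵥ P *ᵥ w) + (b : ℂ) * (star w ⬝ᵥ Q *ᵥ w) = 0 := by
    have h2 : star w ⬝ᵥ (((a : ℂ) • P + (b : ℂ) • Q) *ᵥ w) = 0 := by
      rw [← h, hEw, dotProduct_zero]
    simpa [Matrix.add_mulVec, Matrix.smul_mulVec, dotProduct_add] using h2
  have ha' : (0 : ℂ) < a := by exact_mod_cast ha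
  have hb' : (0 : ℂ) ≤ b := by exact_mod_cast hb
  have hz := (add_eq_zero_iff_of_nonneg
    (mul_nonneg ha'.le (hP.dotProduct_mulVec_nonneg w))
    (mul_nonneg hb' (hQ.dotProduct_mulVec_nonneg w))).mp hsum
  exact (mul_eq_zero.mp hz.1).resolve_left ha'.ne'

lemma fixes_of_mul_eq_zero {n : ℕ} {T : Mat n →ₗ[ℂ] Mat n} (hT : T 1 = 1) {E : Mat n}
    (h1 : T E * (1 - E) = 0) (h2 : T (1 - E) * E = 0) : T E = E := by
  rw [map_sub, hT, sub_mul, one_mul, sub_eq_zero] at h2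
  rw [mul_sub, mul_one, sub_eq_zero] at h1
  exact h1.trans h2.symm

/-- A constituent with positive weight in a combination of unital completely positive maps fixes
every projection that the combination fixes. -/
lemma fixes_of_combination {n : ℕ} {τ S T : Mat n →ₗ[ℂ] Mat n} (hτ : τ 1 = 1)
    (hS : MemUCP S) (hT : MemUCP T) {a b : ℝ} (ha : 0 < a) (hb : 0 ≤ b)
    (h : τ = (a : ℂ) • S + (b : ℂ) • T) {E : Mat n} (hE : IsProjn E) (hfix : τ E = E) :
    S E = E := by
  have key : ∀ G : Mat n, IsProjn G → τ G = G → S G * (1 - G) = 0 := fun G hG hfixG =>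
    mul_compl_eq_zero hG (hS.1.posSemidef hG.posSemidef) (hT.1.posSemidef hG.posSemidef) ha hb
      (by rw [h] at hfixG; simpa using hfixG.symm)
  refine fixes_of_mul_eq_zero hS.2 (key E hE hfix) ?_
  simpa using key (1 - E) hE.compl (by rw [map_sub, hτ, hfix])

/-- if `τ = λ τ₁ + (1-λ) τ₀` is a proper convex combination in `CP_φ` and `E`
is an orthogonal projection fixed by `τ`, then `E` is fixed by `τ₀` and `τ₁`; consequently
the non-ergodic elements form a face of `CP_φ`. -/
theorem birkhoff_stmt1 {n : ℕ} (φ : Mat n →ₗ[ℂ] ℂ) (hφ : IsStateOn φ) (hφf : IsFaithful φ)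
    (τ τ₀ τ₁ : Mat n →ₗ[ℂ] Mat n) (hτ : MemCPphi φ τ)
    (h0 : MemCPphi φ τ₀) (h1 : MemCPphi φ τ₁)
    (l : ℝ) (hl0 : 0 < l) (hl1 : l < 1)
    (hconv : τ = (l : ℂ) • τ₁ + ((1 - l : ℝ) : ℂ) • τ₀) :
    (∀ E : Mat n, IsProjn E → τ E = E → τ₀ E = E ∧ τ₁ E = E) ∧
      (¬ IsErgodic τ → ¬ IsErgodic τ₀ ∧ ¬ IsErgodic τ₁) := by
  have main : ∀ E : Mat n, IsProjn E → τ E = E → τ₀ E = E ∧ τ₁ E = E := fun E hE hfix =>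
    ⟨fixes_of_combination hτ.2.1 ⟨h0.1, h0.2.1⟩ ⟨h1.1, h1.2.1⟩ (sub_pos.mpr hl1) hl0.le
      (by rw [hconv, add_comm]) hE hfix,
     fixes_of_combination hτ.2.1 ⟨h1.1, h1.2.1⟩ ⟨h0.1, h0.2.1⟩ hl0 (sub_pos.mpr hl1).le
      hconv hE hfix⟩
  refine ⟨main, fun hne => ⟨fun herg => hne ?_, fun herg => hne ?_⟩⟩
  · exact fun E hE hfix => herg E hE (main E hE hfix).1
  · exact fun E hE hfix => herg E hE (main E hE hfix).2
end

section
/- Let φ be a faithful state on M_n(ℂ). For every τ ∈ CP_φ and every λ ∈ [0,1), the map τ_λ = λτ + (1−λ)·(x ↦ φ(x)·1) is an ergodic element of CP_φ, and τ_λ(x) → τ(x) for every x ∈ M_n(ℂ) as λ → 1. Consequently the ergodic elements of CP_φ are dense in CP_φ. -/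
/-! Ergodicity of `τ_λ` comes from compression by the complement of a fixed projection. Let `E ≠ 0`
be a projection fixed by `τ_λ` and let `F = 1 - E`. Compressing the fixed-point equation by `F` gives
`λ F τ(E) F + (1 - λ) φ(E) F = 0`. Both terms are positive semidefinite, and `φ(E) > 0` because `φ` is
faithful, so `F = 0`.

Membership in `CP_φ` rests on complete positivity of `x ↦ φ(x) 1`: on a positive block matrix `A`
it gives the Kronecker product of the scalar matrix `(φ(A_ij))` with the identity, and the former is
positive since `∑ conj(v_i) φ(A_ij) v_j = φ(Vᴴ A V)` for `V = v ⊗ 1`. Convergence is continuity in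
`λ` of an affine expression, and the dense sequence uses `λ = 1 - 1 / (m + 1)`. -/

open Matrix ComplexOrder

/-- Positivity with values in the complex order. -/
lemma IsStateOn.nonneg {n : ℕ} {φ : Mat n →ₗ[ℂ] ℂ} (hφ : IsStateOn φ) {x : Mat n}
    (hx : x.PosSemidef) : 0 ≤ φ x := by
  rw [Complex.nonneg_iff]
  exact ⟨(hφ.2 x hx).1, (hφ.2 x hx).2.symm⟩

/-- States are Hermitian, by polarization at the identity: the values of `φ` on
`(x + 1)ᴴ (x + 1)` and `(x + i)ᴴ (x + i)` are real. -/
lemma IsStateOn.map_conjTranspose {n : ℕ} {φ : Mat n →ₗ[ℂ] ℂ} (hφ : IsStateOn φ) (x : Mat n) :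
    φ xᴴ = star (φ x) := by
  have h0 := (hφ.2 _ (posSemidef_conjTranspose_mul_self x)).2
  have h1 := (hφ.2 _ (posSemidef_conjTranspose_mul_self (x + 1))).2
  have h2 := (hφ.2 _ (posSemidef_conjTranspose_mul_self (x + Complex.I • (1 : Mat n)))).2
  simp only [conjTranspose_add, conjTranspose_smul, conjTranspose_one, Matrix.add_mul,
    Matrix.mul_add, Matrix.smul_mul, Matrix.mul_smul, Matrix.one_mul, Matrix.mul_one, map_add,
    map_smul, hφ.1] at h1 h2
  simp [h0] at h1 h2
  apply Complex.ext
  · simp; linarith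
  · simp; linarith

/-- The scalar matrix obtained by applying a state blockwise to a positive matrix is positive. -/
lemma IsStateOn.posSemidef_blocks {n : ℕ} {φ : Mat n →ₗ[ℂ] ℂ} (hφ : IsStateOn φ) {k : ℕ}
    {A : Matrix (Fin k × Fin n) (Fin k × Fin n) ℂ} (hA : A.PosSemidef) :
    (Matrix.of fun i j : Fin k => φ (Matrix.of fun a b => A (i, a) (j, b))).PosSemidef := by
  refine PosSemidef.of_dotProduct_mulVec_nonneg ?_ fun v => ?_
  · ext i j
    simp only [conjTranspose_apply, of_apply]
    rw [← hφ.map_conjTranspose]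
    congr 1
    ext a b
    exact hA.isHermitian.apply _ _
  -- `V` is the column `v ⊗ 1`, so `Vᴴ A V` is the combination of the blocks of `A` given by `v`.
  · let V : Matrix (Fin k × Fin n) (Fin n) ℂ := Matrix.of fun p b => if p.2 = b then v p.1 else 0
    have hV : Vᴴ * A * V = ∑ i, ∑ j, (star (v i) * v j) •
        (Matrix.of fun a b => A (i, a) (j, b) : Mat n) := by
      ext a b
      simp only [V, Matrix.mul_apply, conjTranspose_apply, of_apply, Fintype.sum_prod_type,
        Matrix.sum_apply, Matrix.smul_apply, smul_eq_mul, apply_ite star, star_zero, ite_mul,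
        mul_ite, zero_mul, mul_zero, Finset.sum_ite_eq', Finset.mem_univ, if_true,
        Finset.sum_mul]
      rw [Finset.sum_comm]
      refine Finset.sum_congr rfl fun i _ => Finset.sum_congr rfl fun j _ => ?_
      ring
    have h := hφ.nonneg (hA.conjTranspose_mul_mul_same V)
    rw [hV] at h
    convert h using 1
    simp only [dotProduct, mulVec, map_sum, map_smul, smul_eq_mul, Pi.star_apply, of_apply,
      Finset.mul_sum]
    refine Finset.sum_congr rfl fun i _ => Finset.sum_congr rfl fun j _ => ?_
    ring

lemma IsStateOn.isCPmap_smulRight {n : ℕ} {φ : Mat n →ₗ[ℂ] ℂ} (hφ : IsStateOn φ) :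
    IsCPmap (φ.smulRight (1 : Mat n)) := by
  intro k A hA
  exact (hφ.posSemidef_blocks hA).kronecker PosSemidef.one

/-- Positivity is the case `k = 1` of complete positivity. -/
lemma IsCPmap.map_posSemidef {n : ℕ} {τ : Mat n →ₗ[ℂ] Mat n} (hτ : IsCPmap τ) {x : Mat n}
    (hx : x.PosSemidef) : (τ x).PosSemidef :=
  (hτ 1 _ (hx.submatrix Prod.snd)).submatrix fun a => ((0 : Fin 1), a)

lemma memCPphi_mix {n : ℕ} {φ : Mat n →ₗ[ℂ] ℂ} (hφ : IsStateOn φ) {τ : Mat n →ₗ[ℂ] Mat n}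
    (hτ : MemCPphi φ τ) {l : ℝ} (h0 : 0 ≤ l) (h1 : l < 1) :
    MemCPphi φ ((l : ℂ) • τ + ((1 - l : ℝ) : ℂ) • φ.smulRight (1 : Mat n)) := by
  refine ⟨fun k A hA => ?_, ?_, fun x => ?_⟩
  · have hl : (0 : ℂ) ≤ (l : ℂ) := by exact_mod_cast h0
    have hm : (0 : ℂ) ≤ ((1 - l : ℝ) : ℂ) := by exact_mod_cast (sub_pos.2 h1).le
    exact ((hτ.1 k A hA).smul hl).add ((hφ.isCPmap_smulRight k A hA).smul hm)
  · rw [LinearMap.add_apply, LinearMap.smul_apply, LinearMap.smul_apply, LinearMap.smulRight_apply,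
      hτ.2.1, hφ.1, one_smul, ← add_smul]
    simp
  · simp [hτ.2.2, hφ.1]
    ring

lemma isErgodic_mix {n : ℕ} {φ : Mat n →ₗ[ℂ] ℂ} (hφ : IsStateOn φ) (hφf : IsFaithful φ)
    {τ : Mat n →ₗ[ℂ] Mat n} (hτ : IsCPmap τ) {l : ℝ} (h0 : 0 ≤ l) (h1 : l < 1) :
    IsErgodic ((l : ℂ) • τ + ((1 - l : ℝ) : ℂ) • φ.smulRight (1 : Mat n)) := by
  intro E hE hfix
  have hEE : Eᴴ * E = E := by rw [hE.1.eq, hE.2]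
  have hEp : E.PosSemidef := hEE ▸ posSemidef_conjTranspose_mul_self E
  by_cases hE0 : E = 0
  · exact Or.inl hE0
  right
  have hne : φ E ≠ 0 := fun h => hE0 (hφf E (by rw [hEE, h]))
  set F : Mat n := 1 - E with hF
  have hFh : Fᴴ = F := by rw [hF, conjTranspose_sub, conjTranspose_one, hE.1.eq]
  have hEF : F * E = 0 := by rw [hF, Matrix.sub_mul, Matrix.one_mul, hE.2, sub_self]
  have hFF : F * F = F := by
    conv_lhs => rw [hF]
    rw [← hF, Matrix.sub_mul, Matrix.one_mul]
    nth_rewrite 2 [hF]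
    rw [Matrix.mul_sub, Matrix.mul_one, hE.2, sub_self, sub_zero]
  have hFp : F.PosSemidef := by
    have := posSemidef_conjTranspose_mul_self F
    rwa [hFh, hFF] at this
  have hcomp : (F * τ E * F).PosSemidef := by
    have := (hτ.map_posSemidef hEp).conjTranspose_mul_mul_same F
    rwa [hFh] at this
  have key : (l : ℂ) • (F * τ E * F) + (((1 - l : ℝ) : ℂ) * φ E) • F = 0 := by
    have := congrArg (fun y => F * y * F) hfix
    simpa only [LinearMap.add_apply, LinearMap.smul_apply, LinearMap.smulRight_apply,
      Matrix.mul_add, Matrix.add_mul, Matrix.mul_smul, Matrix.smul_mul, Matrix.mul_one, hFF, hEF,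
      Matrix.zero_mul, smul_smul] using this
  have hl : (0 : ℂ) ≤ (l : ℂ) := by exact_mod_cast h0
  have hm : (0 : ℂ) < ((1 - l : ℝ) : ℂ) := by exact_mod_cast sub_pos.2 h1
  -- A sum of two nonnegative traces vanishes, so each of them does.
  have htr := congrArg Matrix.trace key
  rw [trace_add, trace_smul, trace_smul, trace_zero, smul_eq_mul, smul_eq_mul] at htr
  have hz := ((add_eq_zero_iff_of_nonneg (mul_nonneg hl hcomp.trace_nonneg)
    (mul_nonneg (mul_nonneg hm.le (hφ.nonneg hEp)) hFp.trace_nonneg)).1 htr).2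
  have hF0 : F = 0 :=
    hFp.trace_eq_zero_iff.1 ((mul_eq_zero.1 hz).resolve_left (mul_ne_zero hm.ne' hne))
  exact (sub_eq_zero.1 hF0).symm

/-- for `τ ∈ CP_φ` and `0 ≤ λ < 1`, the map `τ_λ = λ τ + (1-λ)(x ↦ φ(x)·1)`
is an ergodic element of `CP_φ`, and `τ_λ(x) → τ(x)` as `λ → 1`; consequently the ergodic
elements of `CP_φ` are dense in `CP_φ`. -/
theorem birkhoff_stmt3 {n : ℕ} (φ : Mat n →ₗ[ℂ] ℂ) (hφ : IsStateOn φ) (hφf : IsFaithful φ)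
    (τ : Mat n →ₗ[ℂ] Mat n) (hτ : MemCPphi φ τ) :
    (∀ l : ℝ, 0 ≤ l → l < 1 →
      MemCPphi φ ((l : ℂ) • τ + ((1 - l : ℝ) : ℂ) • φ.smulRight (1 : Mat n)) ∧
      IsErgodic ((l : ℂ) • τ + ((1 - l : ℝ) : ℂ) • φ.smulRight (1 : Mat n))) ∧
    (∀ x : Mat n, Filter.Tendsto
      (fun l : ℝ => ((l : ℂ) • τ + ((1 - l : ℝ) : ℂ) • φ.smulRight (1 : Mat n)) x)
      (nhdsWithin 1 (Set.Ico (0:ℝ) 1)) (nhds (τ x))) ∧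
    (∃ σ : ℕ → (Mat n →ₗ[ℂ] Mat n), (∀ m, MemCPphi φ (σ m) ∧ IsErgodic (σ m)) ∧
      ∀ x : Mat n, Filter.Tendsto (fun m => σ m x) Filter.atTop (nhds (τ x))) := by
  have hlim : ∀ x : Mat n, Filter.Tendsto
      (fun l : ℝ => ((l : ℂ) • τ + ((1 - l : ℝ) : ℂ) • φ.smulRight (1 : Mat n)) x)
      (nhds 1) (nhds (τ x)) := by
    intro x
    have hc : Continuous
        (fun l : ℝ => ((l : ℂ) • τ + ((1 - l : ℝ) : ℂ) • φ.smulRight (1 : Mat n)) x) := by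
      simp only [LinearMap.add_apply, LinearMap.smul_apply]
      fun_prop
    simpa using hc.tendsto 1
  refine ⟨fun l h0 h1 => ⟨memCPphi_mix hφ hτ h0 h1, isErgodic_mix hφ hφf hτ.1 h0 h1⟩,
    fun x => (hlim x).mono_left nhdsWithin_le_nhds,
    fun m => (((1 - 1 / ((m : ℝ) + 1) : ℝ) : ℂ)) • τ +
      ((1 - (1 - 1 / ((m : ℝ) + 1)) : ℝ) : ℂ) • φ.smulRight (1 : Mat n), fun m => ?_,
    fun x => ?_⟩
  · have hpos : (0 : ℝ) < 1 / ((m : ℝ) + 1) := Nat.one_div_pos_of_nat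
    have hle : 1 / ((m : ℝ) + 1) ≤ 1 := by
      rw [div_le_one (by positivity)]
      linarith [Nat.cast_nonneg (α := ℝ) m]
    exact ⟨memCPphi_mix hφ hτ (by linarith) (by linarith),
      isErgodic_mix hφ hφf hτ.1 (by linarith) (by linarith)⟩
  · have h : Filter.Tendsto (fun m : ℕ => 1 - 1 / ((m : ℝ) + 1)) Filter.atTop (nhds 1) := by
      simpa using (tendsto_one_div_add_atTop_nhds_zero_nat (𝕜 := ℝ)).const_sub 1
    exact (hlim x).comp h
end

section
/- (Landau–Streater extremality criterion) Let φ be the normalized trace on M_n(ℂ) and let τ(x) = ∑_{k=1}^d v_k x v_k* satisfy ∑_k v_k v_k* = 1 = ∑_k v_k* v_k, with v_1, …, v_d linearly independent. Then τ is an extreme point of CP_φ if and only if the d² elements {v_i v_j* ⊕ v_j* v_i : 1 ≤ i, j ≤ d} of M_n(ℂ) ⊕ M_n(ℂ) are linearly independent, i.e. the only scalars μ^i_j ∈ ℂ with both ∑_{i,j} μ^i_j v_i v_j* = 0 and ∑_{i,j} μ^i_j v_j* v_i = 0 are μ^i_j = 0 for all i, j. -/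
/-! The maps `x ↦ ∑ i, ∑ j, C i j • v i * x * (v j)ᴴ`, for a coefficient matrix `C`, form the family
containing `krausMap v` (at `C = 1`). Linear independence of `v` makes `C` recoverable from the map
(`eq_of_coeffMap_eq`), a positive semidefinite `C` gives a completely positive map
(`isCPmap_coeffMap`), and being unital or trace preserving are the affine conditions
`∑ C i j • v i * (v j)ᴴ = 1` and `∑ C i j • (v j)ᴴ * v i = 1`.

If the family `v i * (v j)ᴴ ⊕ (v j)ᴴ * v i` is dependent, the set of relations is closed under
`lam ↦ lamᴴ`, so there is a nonzero Hermitian relation `H`; for small `ε > 0` both `1 ± ε • H` are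
positive semidefinite, and `krausMap v` is the midpoint of the two corresponding maps.

Conversely, if `krausMap v` is a proper convex combination of `τ₀` and `τ₁`, then the Choi matrix of
`τ₁` is dominated by a multiple of that of `krausMap v`, so its range lies in the span of `v`. Hence
`τ₁` is the map with some coefficient matrix `C` (`exists_coeffMap_eq`); now `C - 1` is a relation,
so independence forces `C = 1`. -/

open Matrix ComplexOrder

section LandauStreater

open scoped MatrixOrder Kronecker

variable {n d : ℕ}

/-! ### Maps given by a coefficient matrix -/

/-- The map `x ↦ ∑ i, ∑ j, C i j • v i * x * (v j)ᴴ` with coefficient matrix `C`. -/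
noncomputable def coeffMap (v : Fin d → Mat n) (C : Matrix (Fin d) (Fin d) ℂ) :
    Mat n →ₗ[ℂ] Mat n where
  toFun x := ∑ i, ∑ j, C i j • (v i * x * (v j)ᴴ)
  map_add' x y := by simp [Matrix.mul_add, Matrix.add_mul, Finset.sum_add_distrib]
  map_smul' c x := by simp [Finset.smul_sum, smul_comm c]

lemma coeffMap_apply (v : Fin d → Mat n) (C : Matrix (Fin d) (Fin d) ℂ) (x : Mat n) :
    coeffMap v C x = ∑ i, ∑ j, C i j • (v i * x * (v j)ᴴ) := rfl

lemma coeffMap_one (v : Fin d → Mat n) : coeffMap v 1 = krausMap v := by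
  ext1 x
  simp [coeffMap_apply, krausMap, Matrix.one_apply]

lemma coeffMap_add (v : Fin d → Mat n) (C D : Matrix (Fin d) (Fin d) ℂ) :
    coeffMap v (C + D) = coeffMap v C + coeffMap v D := by
  ext1 x
  simp [coeffMap_apply, add_smul, Finset.sum_add_distrib]

lemma coeffMap_smul (v : Fin d → Mat n) (c : ℂ) (C : Matrix (Fin d) (Fin d) ℂ) :
    coeffMap v (c • C) = c • coeffMap v C := by
  ext1 x
  simp [coeffMap_apply, Finset.smul_sum, mul_smul]

/-- The block matrix obtained by applying the map to the blocks of `A` is a congruence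
transform of `C ⊗ₖ A`. -/
lemma isCPmap_coeffMap (v : Fin d → Mat n) {C : Matrix (Fin d) (Fin d) ℂ} (hC : C.PosSemidef) :
    IsCPmap (coeffMap v C) := by
  intro k A hA
  let W : Matrix (Fin k × Fin n) (Fin d × (Fin k × Fin n)) ℂ :=
    Matrix.of fun p r => if p.1 = r.2.1 then v r.1 p.2 r.2.2 else 0
  have h := (hC.kronecker hA).mul_mul_conjTranspose_same W
  suffices hW : (Matrix.of fun p q : Fin k × Fin n =>
      coeffMap v C (Matrix.of fun a b => A (p.1, a) (q.1, b)) p.2 q.2) = W * (C ⊗ₖ A) * Wᴴ by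
    rwa [hW]
  ext ⟨p, a⟩ ⟨q, c⟩
  simp only [Matrix.of_apply, coeffMap_apply, Matrix.sum_apply, Matrix.smul_apply, Matrix.mul_apply,
    Matrix.conjTranspose_apply, W, Matrix.kroneckerMap_apply, Fintype.sum_prod_type, smul_eq_mul]
  rw [Finset.sum_comm]
  refine Finset.sum_congr rfl fun j _ => ?_
  rw [Finset.sum_eq_single q (fun b _ hb => by simp [Ne.symm hb]) (by simp)]
  simp only [ite_mul, zero_mul, if_true, Finset.sum_mul, Finset.mul_sum]
  rw [Finset.sum_comm]
  refine Finset.sum_congr rfl fun b _ => ?_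
  refine Finset.sum_congr rfl fun i _ => ?_
  rw [Finset.sum_eq_single p (fun b _ hb => by simp [Ne.symm hb]) (by simp)]
  refine Finset.sum_congr rfl fun e _ => ?_
  simp
  ring

lemma coeffMap_apply_one (v : Fin d → Mat n) (C : Matrix (Fin d) (Fin d) ℂ) :
    coeffMap v C 1 = ∑ i, ∑ j, C i j • (v i * (v j)ᴴ) := by
  simp [coeffMap_apply]

lemma trace_coeffMap (v : Fin d → Mat n) (C : Matrix (Fin d) (Fin d) ℂ) (x : Mat n) :
    (coeffMap v C x).trace = ((∑ i, ∑ j, C i j • ((v j)ᴴ * v i)) * x).trace := by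
  simp only [coeffMap_apply, Matrix.trace_sum, Matrix.trace_smul, Finset.sum_mul, Matrix.smul_mul]
  refine Finset.sum_congr rfl fun i _ => Finset.sum_congr rfl fun j _ => ?_
  rw [Matrix.trace_mul_comm, Matrix.mul_assoc]

/-- A map with coefficient matrix `C` preserves the normalized trace exactly when it satisfies the
second affine condition; for `n = 0` both sides hold trivially. -/
lemma trace_preserving_iff (v : Fin d → Mat n) (C : Matrix (Fin d) (Fin d) ℂ) :
    (∀ x, trφ n (coeffMap v C x) = trφ n x) ↔ ∑ i, ∑ j, C i j • ((v j)ᴴ * v i) = 1 := by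
  rcases Nat.eq_zero_or_pos n with rfl | hn
  · exact ⟨fun _ => Subsingleton.elim _ _, fun _ x => congrArg _ (Subsingleton.elim _ _)⟩
  · have hn' : (n : ℂ) ≠ 0 := by exact_mod_cast hn.ne'
    simp only [trφ, LinearMap.smul_apply, Matrix.traceLinearMap_apply, smul_eq_mul,
      mul_right_inj' (inv_ne_zero hn'), trace_coeffMap]
    rw [Matrix.ext_iff_trace_mul_right]
    simp

/-! ### Choi matrices -/

/-- The Choi matrix of `T`, with entry `T (E_ij) a b` at `((i, a), (j, b))`. -/
noncomputable def choi (T : Mat n →ₗ[ℂ] Mat n) : Matrix (Fin n × Fin n) (Fin n × Fin n) ℂ :=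
  Matrix.of fun p q => T (Matrix.single p.1 q.1 1) p.2 q.2

lemma choi_injective {S T : Mat n →ₗ[ℂ] Mat n} (h : choi S = choi T) : S = T := by
  refine Matrix.ext_linearMap _ fun i j => LinearMap.ext_ring ?_
  ext a b
  exact congrFun (congrFun h (i, a)) (j, b)

lemma choi_posSemidef {T : Mat n →ₗ[ℂ] Mat n} (hT : IsCPmap T) : (choi T).PosSemidef := by
  -- The rank-one matrix of the maximally entangled vector has the matrix units as its blocks.
  have h := hT n _ (Matrix.posSemidef_vecMulVec_self_star
    (fun p : Fin n × Fin n => if p.1 = p.2 then (1 : ℂ) else 0))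
  refine (congrArg Matrix.PosSemidef ?_).mpr h
  ext ⟨i, a⟩ ⟨j, b⟩
  simp only [choi, Matrix.of_apply]
  refine congrArg (fun x => T x a b) ?_
  ext c e
  simp [Matrix.single_apply, Matrix.vecMulVec_apply, ← ite_and]
  grind

/-- The matrix whose `k`-th column is the vectorization of `v k`. -/
def krausCols (v : Fin d → Mat n) : Matrix (Fin n × Fin n) (Fin d) ℂ :=
  Matrix.of fun p k => v k p.2 p.1

lemma choi_coeffMap (v : Fin d → Mat n) (C : Matrix (Fin d) (Fin d) ℂ) :
    choi (coeffMap v C) = krausCols v * C * (krausCols v)ᴴ := by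
  ext ⟨i, a⟩ ⟨j, b⟩
  simp only [choi, krausCols, Matrix.of_apply, coeffMap_apply, Matrix.sum_apply, Matrix.smul_apply,
    Matrix.mul_apply, Matrix.conjTranspose_apply, Matrix.single_apply, smul_eq_mul, Finset.sum_mul]
  rw [Finset.sum_comm]
  refine Finset.sum_congr rfl fun l _ => Finset.sum_congr rfl fun k _ => ?_
  rw [Finset.sum_eq_single j (fun c _ hc => by simp [Ne.symm hc]) (by simp),
    Finset.sum_eq_single i (fun c _ hc => by simp [Ne.symm hc]) (by simp)]
  simp
  ring

lemma exists_krausCols_leftInverse {v : Fin d → Mat n} (hind : LinearIndependent ℂ v) :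
    ∃ L : Matrix (Fin d) (Fin n × Fin n) ℂ, L * krausCols v = 1 := by
  have hinj : Function.Injective (krausCols v).mulVecLin := by
    rw [injective_iff_map_eq_zero]
    intro c hc
    have h0 : ∑ k, c k • v k = 0 := by
      ext a i
      have := congrFun hc (i, a)
      simpa [krausCols, Matrix.mulVec, dotProduct, Matrix.sum_apply, mul_comm] using this
    exact funext (Fintype.linearIndependent_iff.1 hind c h0)
  obtain ⟨g, hg⟩ := LinearMap.exists_leftInverse_of_injective _ (LinearMap.ker_eq_bot.2 hinj)
  refine ⟨LinearMap.toMatrix' g, ?_⟩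
  apply Matrix.toLin'.injective
  rw [Matrix.toLin'_mul, Matrix.toLin'_toMatrix', Matrix.toLin'_one]
  exact hg

/-- A left inverse of `krausCols v` recovers the coefficient matrix from the Choi matrix. -/
lemma eq_of_coeffMap_eq {v : Fin d → Mat n} (hind : LinearIndependent ℂ v)
    {C D : Matrix (Fin d) (Fin d) ℂ} (h : coeffMap v C = coeffMap v D) : C = D := by
  obtain ⟨L, hL⟩ := exists_krausCols_leftInverse hind
  have hL' : (krausCols v)ᴴ * Lᴴ = 1 := by
    rw [← Matrix.conjTranspose_mul, hL, Matrix.conjTranspose_one]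
  have key : ∀ X : Matrix (Fin d) (Fin d) ℂ, X = L * choi (coeffMap v X) * Lᴴ := by
    intro X
    rw [choi_coeffMap]
    simp only [Matrix.mul_assoc, hL', Matrix.mul_one]
    rw [← Matrix.mul_assoc, hL, Matrix.one_mul]
  rw [key C, key D, h]

/-- A completely positive map occurring in a convex decomposition of `krausMap v` is given by a
coefficient matrix with respect to `v`. -/
lemma exists_coeffMap_eq {v : Fin d → Mat n} (hind : LinearIndependent ℂ v)
    {τ₀ τ₁ : Mat n →ₗ[ℂ] Mat n} (h₀ : IsCPmap τ₀) (h₁ : IsCPmap τ₁) {a b : ℝ}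
    (ha : 0 < a) (hb : 0 < b) (h : krausMap v = (a : ℂ) • τ₁ + (b : ℂ) • τ₀) :
    ∃ C, τ₁ = coeffMap v C := by
  obtain ⟨L, hL⟩ := exists_krausCols_leftInverse hind
  -- `Q` annihilates the columns of `krausCols v`; it is the complement of a possibly oblique
  -- projection onto their span.
  set Q : Matrix (Fin n × Fin n) (Fin n × Fin n) ℂ := 1 - krausCols v * L with hQ
  have hQV : Q * krausCols v = 0 := by
    rw [hQ, Matrix.sub_mul, Matrix.mul_assoc, hL]; simp
  have hchoi : krausCols v * (krausCols v)ᴴ = (a : ℂ) • choi τ₁ + (b : ℂ) • choi τ₀ := by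
    have := choi_coeffMap v 1
    rw [coeffMap_one, Matrix.mul_one] at this
    rw [← this, h]
    rfl
  have hsum : Q * ((a : ℂ) • choi τ₁) * Qᴴ + Q * ((b : ℂ) • choi τ₀) * Qᴴ = 0 := by
    rw [← Matrix.add_mul, ← Matrix.mul_add, ← hchoi, ← Matrix.mul_assoc, hQV]; simp
  have hp₁ := choi_posSemidef h₁
  have hp₀ := choi_posSemidef h₀
  have haC : (0 : ℂ) ≤ a := by exact_mod_cast ha.le
  have hbC : (0 : ℂ) ≤ b := by exact_mod_cast hb.le
  have hz := ((add_eq_zero_iff_of_nonneg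
    ((hp₁.smul haC).mul_mul_conjTranspose_same Q).nonneg
    ((hp₀.smul hbC).mul_mul_conjTranspose_same Q).nonneg).1 hsum).1
  have hz' : Q * choi τ₁ * Qᴴ = 0 := by
    rw [Matrix.mul_smul, Matrix.smul_mul] at hz
    exact (smul_eq_zero.1 hz).resolve_left (by exact_mod_cast ha.ne')
  obtain ⟨B, hB⟩ := CStarAlgebra.nonneg_iff_eq_star_mul_self.1 hp₁.nonneg
  rw [Matrix.star_eq_conjTranspose] at hB
  have hBQ : B * Qᴴ = 0 := by
    rw [← Matrix.conjTranspose_mul_self_eq_zero, ← hz', hB]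
    simp [Matrix.mul_assoc]
  have hr : choi τ₁ * Qᴴ = 0 := by rw [hB, Matrix.mul_assoc, hBQ, Matrix.mul_zero]
  have hl : Q * choi τ₁ = 0 := by
    have := congrArg Matrix.conjTranspose hr
    rwa [Matrix.conjTranspose_mul, Matrix.conjTranspose_conjTranspose, hp₁.1.eq,
      Matrix.conjTranspose_zero] at this
  have hr' : choi τ₁ = choi τ₁ * (Lᴴ * (krausCols v)ᴴ) := by
    rw [hQ, Matrix.conjTranspose_sub, Matrix.mul_sub, sub_eq_zero] at hr
    simpa using hr
  have hl' : choi τ₁ = krausCols v * L * choi τ₁ := by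
    rw [hQ, Matrix.sub_mul, sub_eq_zero] at hl
    simpa using hl
  refine ⟨L * choi τ₁ * Lᴴ, choi_injective ?_⟩
  rw [choi_coeffMap]
  calc choi τ₁ = krausCols v * L * (choi τ₁ * (Lᴴ * (krausCols v)ᴴ)) := by rw [← hr', ← hl']
    _ = _ := by simp only [Matrix.mul_assoc]

/-! ### Relations and extremality -/

open scoped Matrix.Norms.L2Operator in
/-- The identity is an interior point of the positive semidefinite cone; `ε = (‖H‖ + 1)⁻¹` works
because `± H ≤ ‖H‖ • 1`. -/
lemma exists_pos_posSemidef_one_add_smul {H : Matrix (Fin d) (Fin d) ℂ} (hH : H.IsHermitian) :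
    ∃ ε : ℝ, 0 < ε ∧ (1 + (ε : ℂ) • H).PosSemidef ∧ (1 - (ε : ℂ) • H).PosSemidef := by
  have key : ∀ K : Matrix (Fin d) (Fin d) ℂ, K.IsHermitian →
      (1 - (((‖K‖ + 1)⁻¹ : ℝ) : ℂ) • K).PosSemidef := by
    intro K hK
    have hpos : 0 < ‖K‖ + 1 := by positivity
    have h1 : K ≤ algebraMap ℝ _ ‖K‖ := IsSelfAdjoint.le_algebraMap_norm_self hK
    rw [Matrix.le_iff] at h1
    have h2 : ((algebraMap ℝ (Matrix (Fin d) (Fin d) ℂ) ‖K‖ - K) + 1).PosSemidef :=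
      h1.add Matrix.PosSemidef.one
    have h3 := h2.smul (a := (((‖K‖ + 1)⁻¹ : ℝ) : ℂ)) (by exact_mod_cast (inv_pos.2 hpos).le)
    convert h3 using 1
    have h4 : algebraMap ℝ (Matrix (Fin d) (Fin d) ℂ) ‖K‖ - K + 1
        = ((‖K‖ + 1 : ℝ) : ℂ) • (1 : Matrix (Fin d) (Fin d) ℂ) - K := by
      rw [Algebra.algebraMap_eq_smul_one]
      push_cast
      rw [add_smul, one_smul, Complex.coe_smul]
      abel
    rw [h4, smul_sub, smul_smul, ← Complex.ofReal_mul, inv_mul_cancel₀ hpos.ne']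
    simp
  refine ⟨(‖H‖ + 1)⁻¹, by positivity, ?_, key H hH⟩
  have := key (-H) hH.neg
  rwa [norm_neg, smul_neg, sub_neg_eq_add] at this

/-- `lam` is a linear relation among the elements `v i * (v j)ᴴ ⊕ (v j)ᴴ * v i`. -/
def IsRelation (v : Fin d → Mat n) (lam : Matrix (Fin d) (Fin d) ℂ) : Prop :=
  ∑ i, ∑ j, lam i j • (v i * (v j)ᴴ) = 0 ∧ ∑ i, ∑ j, lam i j • ((v j)ᴴ * v i) = 0

lemma IsRelation.smul {v : Fin d → Mat n} {A : Matrix (Fin d) (Fin d) ℂ}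
    (hA : IsRelation v A) (c : ℂ) : IsRelation v (c • A) := by
  constructor
  · simpa [Finset.smul_sum, mul_smul] using congrArg (c • ·) hA.1
  · simpa [Finset.smul_sum, mul_smul] using congrArg (c • ·) hA.2

lemma IsRelation.add {v : Fin d → Mat n} {A B : Matrix (Fin d) (Fin d) ℂ}
    (hA : IsRelation v A) (hB : IsRelation v B) : IsRelation v (A + B) := by
  constructor
  · simp [add_smul, Finset.sum_add_distrib, hA.1, hB.1]
  · simp [add_smul, Finset.sum_add_distrib, hA.2, hB.2]

lemma IsRelation.conjTranspose {v : Fin d → Mat n} {A : Matrix (Fin d) (Fin d) ℂ}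
    (hA : IsRelation v A) : IsRelation v Aᴴ := by
  constructor
  · have := congrArg Matrix.conjTranspose hA.1
    rw [Finset.sum_comm]
    simpa [Matrix.conjTranspose_sum] using this
  · have := congrArg Matrix.conjTranspose hA.2
    rw [Finset.sum_comm]
    simpa [Matrix.conjTranspose_sum] using this

/-- Adding a relation to the coefficient matrix `1` keeps the map unital and trace preserving. -/
lemma memCPphi_one_add {v : Fin d → Mat n}
    (hv1 : ∑ k, v k * (v k)ᴴ = 1) (hv2 : ∑ k, (v k)ᴴ * v k = 1)
    {A : Matrix (Fin d) (Fin d) ℂ} (hA : IsRelation v A) (hpos : (1 + A).PosSemidef) :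
    MemCPphi (trφ n) (coeffMap v (1 + A)) := by
  refine ⟨isCPmap_coeffMap v hpos, ?_, (trace_preserving_iff v _).2 ?_⟩
  · rw [coeffMap_apply_one]
    simp [add_smul, Finset.sum_add_distrib, hA.1, Matrix.one_apply, hv1]
  · simp [add_smul, Finset.sum_add_distrib, hA.2, Matrix.one_apply, hv2]

/-- At an extreme point a Hermitian relation vanishes, since `krausMap v` is the midpoint of the maps
with coefficient matrices `1 ± ε • H`. -/
lemma IsRelation.eq_zero_of_isHermitian {v : Fin d → Mat n} (hind : LinearIndependent ℂ v)
    (hv1 : ∑ k, v k * (v k)ᴴ = 1) (hv2 : ∑ k, (v k)ᴴ * v k = 1)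
    (hext : IsExtremeIn (MemCPphi (trφ n)) (krausMap v))
    {H : Matrix (Fin d) (Fin d) ℂ} (hH : IsRelation v H) (hherm : H.IsHermitian) : H = 0 := by
  obtain ⟨ε, hε, hp, hm⟩ := exists_pos_posSemidef_one_add_smul hherm
  have hm' : (1 + (-(ε : ℂ)) • H).PosSemidef := by rwa [neg_smul, ← sub_eq_add_neg]
  have h := hext.2 _ _ (memCPphi_one_add hv1 hv2 (hH.smul _) hm')
    (memCPphi_one_add hv1 hv2 (hH.smul _) hp) (1 / 2) (by norm_num) (by norm_num) (by
      rw [← coeffMap_one, ← coeffMap_smul, ← coeffMap_smul, ← coeffMap_add]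
      congr 1
      push_cast
      module)
  have h1 := eq_of_coeffMap_eq hind (h.2.trans (coeffMap_one v).symm)
  rw [add_eq_left] at h1
  exact (smul_eq_zero.1 h1).resolve_left (by exact_mod_cast hε.ne')

/-- A summand in a convex decomposition of `krausMap v` equals `krausMap v` when there is no
nontrivial relation. -/
lemma eq_krausMap_of_no_relation {v : Fin d → Mat n} (hind : LinearIndependent ℂ v)
    (hv1 : ∑ k, v k * (v k)ᴴ = 1) (hv2 : ∑ k, (v k)ᴴ * v k = 1)
    (hrel : ∀ lam, IsRelation v lam → lam = 0)
    {τ₀ τ₁ : Mat n →ₗ[ℂ] Mat n} (h₀ : MemCPphi (trφ n) τ₀) (h₁ : MemCPphi (trφ n) τ₁) {a b : ℝ}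
    (ha : 0 < a) (hb : 0 < b) (h : krausMap v = (a : ℂ) • τ₁ + (b : ℂ) • τ₀) :
    τ₁ = krausMap v := by
  obtain ⟨C, rfl⟩ := exists_coeffMap_eq hind h₀.1 h₁.1 ha hb h
  obtain ⟨-, hunit, htr⟩ := h₁
  rw [trace_preserving_iff] at htr
  rw [coeffMap_apply_one] at hunit
  have hC : C - 1 = 0 := by
    refine hrel _ ⟨?_, ?_⟩
    · simp [sub_smul, Finset.sum_sub_distrib, hunit, Matrix.one_apply, hv1]
    · simp [sub_smul, Finset.sum_sub_distrib, htr, Matrix.one_apply, hv2]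
  rw [sub_eq_zero.1 hC, coeffMap_one]

end LandauStreater

/-- Landau–Streater extremality criterion: a doubly stochastic unital CP
map `τ(x) = ∑ v_k x v_k*` with linearly independent Kraus family is extreme in `CP_φ`
(normalized trace `φ`) iff the elements `v_i v_j* ⊕ v_j* v_i` of `M_n(ℂ) ⊕ M_n(ℂ)` are
linearly independent. -/
theorem birkhoff_stmt10 {n d : ℕ} (v : Fin d → Mat n)
    (hind : LinearIndependent ℂ v)
    (hv1 : ∑ k, v k * (v k)ᴴ = 1) (hv2 : ∑ k, (v k)ᴴ * v k = 1) :
    IsExtremeIn (MemCPphi (trφ n)) (krausMap v) ↔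
      ∀ lam : Matrix (Fin d) (Fin d) ℂ,
        (∑ i, ∑ j, lam i j • (v i * (v j)ᴴ) = 0 ∧
          ∑ i, ∑ j, lam i j • ((v j)ᴴ * v i) = 0) → lam = 0 := by
  constructor
  · intro hext lam hlam
    have hrel : IsRelation v lam := hlam
    -- The Hermitian and skew-Hermitian parts of a relation are Hermitian relations up to a scalar.
    have h1 : lam + lamᴴ = 0 :=
      (hrel.add hrel.conjTranspose).eq_zero_of_isHermitian hind hv1 hv2 hext
        (Matrix.isHermitian_add_transpose_self lam)
    have h2 : Complex.I • lam + (Complex.I • lam)ᴴ = 0 :=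
      ((hrel.smul _).add (hrel.smul _).conjTranspose).eq_zero_of_isHermitian hind hv1 hv2 hext
        (Matrix.isHermitian_add_transpose_self _)
    have h3 : lam - lamᴴ = 0 := by
      rw [Matrix.conjTranspose_smul, Complex.star_def, Complex.conj_I, neg_smul, ← sub_eq_add_neg,
        ← smul_sub] at h2
      exact (smul_eq_zero.1 h2).resolve_left Complex.I_ne_zero
    have h4 : (2 : ℂ) • lam = 0 := by
      calc (2 : ℂ) • lam = (lam + lamᴴ) + (lam - lamᴴ) := by module
        _ = 0 := by rw [h1, h3, add_zero]
    exact (smul_eq_zero.1 h4).resolve_left two_ne_zero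
  · intro hrel
    refine ⟨?_, fun τ₀ τ₁ h₀ h₁ l hl0 hl1 h => ⟨?_, ?_⟩⟩
    · have h0 : IsRelation v 0 := by simp [IsRelation]
      have := memCPphi_one_add hv1 hv2 h0 (by simpa using Matrix.PosSemidef.one)
      rwa [add_zero, coeffMap_one] at this
    · exact eq_krausMap_of_no_relation hind hv1 hv2 hrel h₁ h₀ (sub_pos.2 hl1) hl0
        (by rw [h, add_comm])
    · exact eq_krausMap_of_no_relation hind hv1 hv2 hrel h₀ h₁ hl0 (sub_pos.2 hl1) h
end

section
/- Let φ be the normalized trace on M_n(ℂ) and let τ(x) = ∑_{k=1}^d v_k x v_k* be an extreme point of CP_φ with v_1, …, v_d linearly independent. If η ∈ CP_φ has a Kraus representation η(x) = ∑_{k=1}^d l_k x l_k* such that the linear span of {l_1, …, l_d} equals the linear span of {v_1, …, v_d}, then η = τ. That is, an extreme point of CP_φ is the unique element of CP_φ whose Kraus operators span the given operator subspace. -/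
/-!
Write `l k = ∑ j, C k j • v j`. Then `krausMap l` is the map
`x ↦ ∑ i j, (Cᴴ * C) j i • (v i * x * (v j)ᴴ)`. The positive matrix `Cᴴ * C` is dominated by some
scalar `M > 1`, so `M • 1 - Cᴴ * C = Bᴴ * B`; the Kraus family `w k = ∑ j, B k j • v j` then
satisfies `M • krausMap v = krausMap l + krausMap w` (`exists_complement`). Hence `krausMap v` is a
proper convex combination of `krausMap l` and `(M - 1)⁻¹ • krausMap w`, both of which lie in
`CP_φ`, and extremality forces `krausMap l = krausMap v`.
-/

open Matrix ComplexOrder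

lemma krausMap_apply {n d : ℕ} (v : Fin d → Mat n) (x : Mat n) :
    krausMap v x = ∑ k, v k * x * (v k)ᴴ := rfl

/-- Blockwise application of `x ↦ v x v*` is conjugation by `1 ⊗ v`, hence preserves positivity. -/
lemma isCPmap_krausMap {n d : ℕ} (v : Fin d → Mat n) : IsCPmap (krausMap v) := by
  intro k A hA
  have key : (Matrix.of fun p q : Fin k × Fin n =>
      krausMap v (Matrix.of fun a b => A (p.1, a) (q.1, b)) p.2 q.2) =
      ∑ i, (Matrix.kroneckerMap (· * ·) (1 : Mat k) (v i)) * A *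
        (Matrix.kroneckerMap (· * ·) (1 : Mat k) (v i))ᴴ := by
    ext p q
    simp only [krausMap_apply, Matrix.of_apply, Matrix.sum_apply]
    refine Finset.sum_congr rfl fun i _ => ?_
    simp [Matrix.mul_apply, Fintype.sum_prod_type, Matrix.one_apply, apply_ite,
      Finset.sum_ite_eq, Finset.sum_ite_irrel]
  rw [key]
  exact Matrix.posSemidef_sum _ fun i _ => hA.mul_mul_conjTranspose_same _

lemma IsCPmap.smul {n : ℕ} {T : Mat n →ₗ[ℂ] Mat n} (hT : IsCPmap T) {c : ℝ} (hc : 0 ≤ c) :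
    IsCPmap ((c : ℂ) • T) := by
  intro k A hA
  have h := (hT k A hA).smul (a := (c : ℂ)) (by exact_mod_cast hc)
  convert h using 1
  ext p q
  rfl

lemma trφ_krausMap {n d : ℕ} (v : Fin d → Mat n) (hv : ∑ k, (v k)ᴴ * v k = 1) (x : Mat n) :
    trφ n (krausMap v x) = trφ n x := by
  have h : (krausMap v x).trace = x.trace := by
    calc (krausMap v x).trace = ∑ k, ((v k)ᴴ * v k * x).trace := by
          rw [krausMap_apply, Matrix.trace_sum]
          refine Finset.sum_congr rfl fun k _ => ?_
          rw [Matrix.trace_mul_comm, ← Matrix.mul_assoc]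
      _ = x.trace := by rw [← Matrix.trace_sum, ← Finset.sum_mul, hv, one_mul]
  simp [trφ, h]

/-- A Kraus family obtained from `v` by a coefficient matrix `C` depends only on `Cᴴ * C`. -/
lemma krausMap_comb {n d : ℕ} (v : Fin d → Mat n) (C : Mat d) (x : Mat n) :
    krausMap (fun k => ∑ j, C k j • v j) x =
      ∑ i, ∑ j, (Cᴴ * C) j i • (v i * x * (v j)ᴴ) := by
  have hk : ∀ k, (∑ j, C k j • v j) * x * (∑ j, C k j • v j)ᴴ =
      ∑ i, ∑ j, (star (C k j) * C k i) • (v i * x * (v j)ᴴ) := by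
    intro k
    simp only [Matrix.conjTranspose_sum, Matrix.conjTranspose_smul, Finset.sum_mul,
      Finset.mul_sum, Matrix.smul_mul, Matrix.mul_smul, smul_smul]
    rw [Finset.sum_comm]
  simp only [krausMap_apply, hk, Matrix.mul_apply, Matrix.conjTranspose_apply, Finset.sum_smul]
  rw [Finset.sum_comm]
  refine Finset.sum_congr rfl fun i _ => ?_
  rw [Finset.sum_comm]

open scoped MatrixOrder Matrix.Norms.L2Operator in
/-- Every matrix `Cᴴ * C` is dominated by a scalar `M > 1`. -/
lemma exists_scalar_bound {d : ℕ} (C : Mat d) :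
    ∃ (M : ℝ) (B : Mat d), 1 < M ∧ Cᴴ * C + Bᴴ * B = (M : ℂ) • 1 := by
  have h1 : Cᴴ * C ≤ algebraMap ℝ (Mat d) ‖Cᴴ * C‖ :=
    IsSelfAdjoint.le_algebraMap_norm_self (Matrix.isHermitian_conjTranspose_mul_self C)
  -- The added `2` makes the scalar exceed `1`, so that `M⁻¹` and `1 - M⁻¹` are positive weights.
  have h2 : algebraMap ℝ (Mat d) ‖Cᴴ * C‖ ≤ algebraMap ℝ (Mat d) (‖Cᴴ * C‖ + 2) :=
    algebraMap_mono _ (by linarith)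
  have h3 := Matrix.le_iff.mp (h1.trans h2)
  obtain ⟨B, hB⟩ := CStarAlgebra.nonneg_iff_eq_star_mul_self.mp h3.nonneg
  rw [Matrix.star_eq_conjTranspose] at hB
  refine ⟨‖Cᴴ * C‖ + 2, B, by linarith [norm_nonneg (Cᴴ * C)], ?_⟩
  rw [← hB, add_sub_cancel, Algebra.algebraMap_eq_smul_one]
  ext i j
  simp [Matrix.smul_apply]

/-- If each `l k` lies in the span of `v`, then some multiple of `krausMap v` dominates `krausMap l`
in the order of complete positivity: the difference is again a Kraus map. -/
lemma exists_complement {n d : ℕ} (v l : Fin d → Mat n)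
    (hspan : ∀ k, l k ∈ Submodule.span ℂ (Set.range v)) :
    ∃ (M : ℝ) (w : Fin d → Mat n), 1 < M ∧
      (M : ℂ) • krausMap v = krausMap l + krausMap w := by
  choose C hC using fun k => (Submodule.mem_span_range_iff_exists_fun ℂ).mp (hspan k)
  obtain ⟨M, B, hM, hB⟩ := exists_scalar_bound (Matrix.of C)
  refine ⟨M, fun k => ∑ j, B k j • v j, hM, LinearMap.ext fun x => ?_⟩
  have hl : l = fun k => ∑ j, Matrix.of C k j • v j := funext fun k => (hC k).symm
  rw [LinearMap.add_apply, hl, krausMap_comb, krausMap_comb]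
  simp only [← Finset.sum_add_distrib, ← add_smul, ← Matrix.add_apply, hB]
  simp [krausMap_apply, Matrix.one_apply, Finset.smul_sum]

/-- an extreme point `τ(x) = ∑ v_k x v_k*` of `CP_φ` (normalized trace)
is the unique element of `CP_φ` whose Kraus operators span the subspace
`span{v_1, …, v_d}`: any `η ∈ CP_φ` with Kraus family spanning the same subspace
equals `τ`. -/
theorem birkhoff_stmt11 {n d : ℕ} (v l : Fin d → Mat n)
    (hind : LinearIndependent ℂ v)
    (hv1 : ∑ k, v k * (v k)ᴴ = 1) (hv2 : ∑ k, (v k)ᴴ * v k = 1)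
    (hext : IsExtremeIn (MemCPphi (trφ n)) (krausMap v))
    (hl1 : ∑ k, l k * (l k)ᴴ = 1) (hl2 : ∑ k, (l k)ᴴ * l k = 1)
    (hspan : Submodule.span ℂ (Set.range l) = Submodule.span ℂ (Set.range v)) :
    krausMap l = krausMap v := by
  obtain ⟨M, w, hM, hw⟩ := exists_complement v l fun k =>
    hspan ▸ Submodule.subset_span (Set.mem_range_self k)
  have hM0 : (M : ℂ) ≠ 0 := by exact_mod_cast (by linarith : M ≠ 0)
  have hM1 : (M : ℂ) - 1 ≠ 0 := by exact_mod_cast (by linarith : M - 1 ≠ 0)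
  have hone : ∀ u : Fin d → Mat n, ∑ k, u k * (u k)ᴴ = 1 → krausMap u 1 = 1 := by
    intro u hu
    simpa [krausMap_apply] using hu
  have hη : MemCPphi (trφ n) (krausMap l) :=
    ⟨isCPmap_krausMap l, hone l hl1, trφ_krausMap l hl2⟩
  have hwx : ∀ x, krausMap w x = (M : ℂ) • krausMap v x - krausMap l x := fun x =>
    eq_sub_of_add_eq' (LinearMap.congr_fun hw x).symm
  have hσ : MemCPphi (trφ n) ((((M - 1)⁻¹ : ℝ) : ℂ) • krausMap w) := by
    refine ⟨(isCPmap_krausMap w).smul (inv_nonneg.mpr (by linarith)), ?_, fun x => ?_⟩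
    · rw [LinearMap.smul_apply, hwx, hone v hv1, hone l hl1]
      push_cast
      rw [show (M : ℂ) • (1 : Mat n) - 1 = ((M : ℂ) - 1) • 1 by rw [sub_smul, one_smul], smul_smul, inv_mul_cancel₀ hM1, one_smul]
    · rw [LinearMap.smul_apply, hwx, map_smul, map_sub, map_smul, trφ_krausMap v hv2,
        trφ_krausMap l hl2]
      push_cast
      simp only [smul_eq_mul]
      field_simp
  -- `krausMap v = M⁻¹ • krausMap l + (1 - M⁻¹) • ((M - 1)⁻¹ • krausMap w)`.
  refine (hext.2 _ _ hσ hη M⁻¹ (by positivity) (inv_lt_one_of_one_lt₀ hM) ?_).2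
  have hc : ((1 - M⁻¹ : ℝ) : ℂ) * (((M - 1)⁻¹ : ℝ) : ℂ) = ((M⁻¹ : ℝ) : ℂ) := by
    push_cast
    field_simp
  rw [smul_smul, hc, ← smul_add, ← hw, smul_smul]
  push_cast
  rw [inv_mul_cancel₀ hM0, one_smul]
end
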